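/- The connection ∇ is the Levi-Civita connection of the standard Riemannian dual metric g: for all smooth vector fields a, b, c on ℝⁿ and every p ∈ ℝⁿ, (i) (∇_a b)(p) − (∇_b a)(p) = [a,b](p) (torsion-free), and (ii) the directional derivative of the function q ↦ g_q(b(q), c(q)) at p in the direction a(p) equals g_p((∇_a b)(p), c(p)) + g_p(b(p), (∇_a c)(p)) (metric compatibility). In particular the listed Γ components are the Christoffel symbols of g. -/

import Mathlib

/-!
Torsion-freeness is the symmetry of `Ga` in its two vector arguments. For metric compatibility,
the product rule gives the terms where `b` and `c` are differentiated plus the term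
`dH(a) * (b₀c₁ + b₁c₀ + H b₁c₁)` coming from the coefficients of `g`, so that the
claim reduces to the pointwise algebraic identity
`(∂_a g)(b, c) = g(Γ(a, b), c) + g(b, Γ(a, c))`. As `H` does not depend on `v`,
`dH(w) = w₁ H_u + S(w)` with `S(w) = ∑ wⁱ H_i` over the transverse indices (`transD`). Every sum
occurring in `Γ` and in `g(Γ(a, b), c)` is a multiple of `S(a)`, `S(b)` or `S(c)`, after which the
identity is polynomial in finitely many real numbers.
-/

noncomputable section

/-- Points of ℝⁿ (dimension `n+3`, so that the dimension is at least 3):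
coordinate `0` is `v`, coordinate `1` is `u`, coordinates `2,…,n+2` are the `xⁱ`. -/
abbrev V (n : ℕ) : Type := Fin (n+3) → ℝ

/-- The standard basis vectors. -/
def ee {n : ℕ} (i : Fin (n+3)) : V n := Pi.single i 1

/-- The standard Riemannian dual metric `g`. -/
def gg {n : ℕ} (H : V n → ℝ) (p : V n) (a b : V n) : ℝ :=
  2 * a 0 * b 0 + H p * (a 0 * b 1 + a 1 * b 0) + (1 + H p ^ 2) / 2 * (a 1 * b 1)
    + ∑ i : Fin (n+3), if 2 ≤ (i : ℕ) then a i * b i else 0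

/-- The vector field `T`. -/
def TT {n : ℕ} (H : V n → ℝ) (p : V n) : V n := ((H p + 1) / 2) • ee 0 - ee 1

/-- The vector field `Z`. -/
def ZZ {n : ℕ} (H : V n → ℝ) (p : V n) : V n := ((H p - 1) / 2) • ee 0 - ee 1

/-- The (constant) coordinate vector fields `X_i`. -/
def XX {n : ℕ} (i : Fin (n+3)) : V n → V n := fun _ => ee i

/-- Partial derivative of `H` in the `i`-th coordinate direction. -/
def Hd {n : ℕ} (H : V n → ℝ) (i : Fin (n+3)) (p : V n) : ℝ := fderiv ℝ H p (ee i)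

/-- `H` is independent of the first coordinate `v`. -/
def VIndep {n : ℕ} (H : V n → ℝ) : Prop :=
  ∀ (p : V n) (c : ℝ), H (Function.update p 0 c) = H p

/-- The Lie bracket of vector fields on ℝⁿ. -/
def br {n : ℕ} (a b : V n → V n) (p : V n) : V n :=
  fderiv ℝ b p (a p) - fderiv ℝ a p (b p)

/-- The Christoffel symbols of `g`, as a symmetric bilinear map `Γ_p : ℝⁿ × ℝⁿ → ℝⁿ`.
Its only nonzero components (indices `v = 0`, `u = 1`, `i = 2, …, n+2`) are
`Γ^u_{vi} = H_i`, `Γ^i_{vu} = −H_i/2`, `Γ^v_{vi} = −(1/2)H·H_i`, `Γ^i_{uu} = −(1/2)H·H_i`,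
`Γ^u_{ui} = (1/2)H·H_i`, `Γ^v_{uu} = (1/2)H_u`, `Γ^v_{ui} = −(1/4)(H²−1)H_i`,
together with their symmetric counterparts. -/
def Ga {n : ℕ} (H : V n → ℝ) (p : V n) (a b : V n) : V n := fun j =>
  if (j : ℕ) = 0 then
    (∑ i : Fin (n+3),
        if 2 ≤ (i : ℕ) then (-(1/2) * H p * Hd H i p) * (a 0 * b i + a i * b 0) else 0)
      + ((1/2) * Hd H 1 p) * (a 1 * b 1)
      + (∑ i : Fin (n+3),
          if 2 ≤ (i : ℕ) then (-(1/4) * ((H p)^2 - 1) * Hd H i p) * (a 1 * b i + a i * b 1)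
          else 0)
  else if (j : ℕ) = 1 then
    (∑ i : Fin (n+3), if 2 ≤ (i : ℕ) then (Hd H i p) * (a 0 * b i + a i * b 0) else 0)
      + (∑ i : Fin (n+3),
          if 2 ≤ (i : ℕ) then ((1/2) * H p * Hd H i p) * (a 1 * b i + a i * b 1) else 0)
  else
    (-(1/2) * Hd H j p) * (a 0 * b 1 + a 1 * b 0) + (-(1/2) * H p * Hd H j p) * (a 1 * b 1)

/-- The connection `(∇_a b)(p) = (Db)_p(a(p)) + Γ_p(a(p), b(p))`. -/
def cd {n : ℕ} (H : V n → ℝ) (a b : V n → V n) (p : V n) : V n :=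
  fderiv ℝ b p (a p) + Ga H p (a p) (b p)

/-- The curvature `R(a,b)c = ∇_a ∇_b c − ∇_b ∇_a c − ∇_{[a,b]} c`. -/
def Rcurv {n : ℕ} (H : V n → ℝ) (a b c : V n → V n) (p : V n) : V n :=
  cd H a (cd H b c) p - cd H b (cd H a c) p - cd H (br a b) c p

/-- The transverse part `∑_{i ≥ 3} wⁱ H_i` of the derivative of `H` in the direction `w`. -/
def transD {n : ℕ} (H : V n → ℝ) (p w : V n) : ℝ :=
  ∑ i : Fin (n+3), if 2 ≤ (i : ℕ) then Hd H i p * w i else 0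

/-- The transverse part `∑_{i ≥ 3} aⁱ bⁱ` of the metric. -/
def transDot {n : ℕ} (a b : V n) : ℝ :=
  ∑ i : Fin (n+3), if 2 ≤ (i : ℕ) then a i * b i else 0

lemma gg_eq {n : ℕ} (H : V n → ℝ) (p a b : V n) :
    gg H p a b = 2 * a 0 * b 0 + H p * (a 0 * b 1 + a 1 * b 0)
      + (1 + H p ^ 2) / 2 * (a 1 * b 1) + transDot a b := rfl

lemma transDot_comm {n : ℕ} (a b : V n) : transDot a b = transDot b a := by
  simp only [transDot, mul_comm (a _)]

lemma transDot_add_left {n : ℕ} (a a' b : V n) :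
    transDot (a + a') b = transDot a b + transDot a' b := by
  simp only [transDot, ← Finset.sum_add_distrib]
  refine Finset.sum_congr rfl fun i _ => ?_
  split_ifs
  · rw [Pi.add_apply]; ring
  · ring

/-- Both sums in a `v`- or `u`-component of `Ga` have this shape. -/
lemma sum_mixed {n : ℕ} (H : V n → ℝ) (p a b : V n) (k s t : ℝ) :
    (∑ i : Fin (n+3), if 2 ≤ (i : ℕ) then (k * Hd H i p) * (s * b i + a i * t) else 0)
      = k * (s * transD H p b + t * transD H p a) := by
  simp only [transD, Finset.mul_sum, ← Finset.sum_add_distrib]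
  refine Finset.sum_congr rfl fun i _ => ?_
  split_ifs <;> ring

lemma Ga_zero {n : ℕ} (H : V n → ℝ) (p a b : V n) :
    Ga H p a b 0 = -(1/2) * H p * (a 0 * transD H p b + b 0 * transD H p a)
      + (1/2) * Hd H 1 p * (a 1 * b 1)
      + -(1/4) * (H p ^ 2 - 1) * (a 1 * transD H p b + b 1 * transD H p a) := by
  simp only [Ga, Fin.val_zero, if_true, sum_mixed]

lemma Ga_one {n : ℕ} (H : V n → ℝ) (p a b : V n) :
    Ga H p a b 1 = (a 0 * transD H p b + b 0 * transD H p a)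
      + (1/2) * H p * (a 1 * transD H p b + b 1 * transD H p a) := by
  have h := sum_mixed H p a b 1 (a 0) (b 0)
  simp only [one_mul] at h
  have h1 : ((1 : Fin (n+3)) : ℕ) = 1 := rfl
  simp only [Ga, h1, one_ne_zero, if_false, if_true, sum_mixed, h]

lemma transDot_Ga {n : ℕ} (H : V n → ℝ) (p a b c : V n) :
    transDot (Ga H p a b) c
      = (-(1/2) * (a 0 * b 1 + a 1 * b 0) - (1/2) * H p * (a 1 * b 1)) * transD H p c := by
  simp only [transDot, transD, Finset.mul_sum]
  refine Finset.sum_congr rfl fun i _ => ?_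
  split_ifs with hi
  · have h0 : ¬ (i : ℕ) = 0 := by omega
    have h1 : ¬ (i : ℕ) = 1 := by omega
    simp only [Ga, h0, h1, if_false]
    ring
  · ring

lemma Ga_symm {n : ℕ} (H : V n → ℝ) (p a b : V n) : Ga H p a b = Ga H p b a := by
  funext j
  by_cases h0 : j = 0
  · subst h0; rw [Ga_zero, Ga_zero]; ring
  by_cases h1 : j = 1
  · subst h1; rw [Ga_one, Ga_one]; ring
  have h0' : ¬ (j : ℕ) = 0 := fun h => h0 (Fin.ext h)
  have h1' : ¬ (j : ℕ) = 1 := fun h => h1 (Fin.ext h)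
  simp only [Ga, h0', h1', if_false]
  ring

lemma Hd_zero {n : ℕ} {H : V n → ℝ} (hH : Differentiable ℝ H) (hHv : VIndep H) (p : V n) :
    Hd H 0 p = 0 := by
  -- `t ↦ H (p + t e₀)` is constant, and its derivative at `0` is `H_v`.
  have hconst : (fun t : ℝ => H (p + t • ee 0)) = fun _ => H p := by
    funext t
    rw [← hHv p (p 0 + t)]
    congr 1
    funext j
    by_cases hj : j = 0
    · subst hj; simp [ee]
    · simp [ee, hj]
  have h := (hH p).hasFDerivAt.hasLineDerivAt (ee 0)
  unfold HasLineDerivAt at h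
  rw [hconst] at h
  exact h.unique (hasDerivAt_const (0 : ℝ) (H p))

lemma fderiv_H {n : ℕ} {H : V n → ℝ} (hH : Differentiable ℝ H) (hHv : VIndep H) (p w : V n) :
    fderiv ℝ H p w = Hd H 1 p * w 1 + transD H p w := by
  have h : fderiv ℝ H p w = ∑ i, Hd H i p * w i := by
    conv_lhs => rw [pi_eq_sum_univ' w]
    rw [map_sum]
    refine Finset.sum_congr rfl fun i _ => ?_
    rw [map_smul, smul_eq_mul, mul_comm]
    rfl
  rw [h, transD, Fin.sum_univ_succ, Fin.sum_univ_succ, Fin.sum_univ_succ (n := n + 2),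
    Fin.sum_univ_succ (n := n + 1), Hd_zero hH hHv]
  simp

/-- The product rule for `g(b, c)`, with the derivative of the coefficients of `g` made explicit. -/
lemma fderiv_gg {n : ℕ} {H : V n → ℝ} (hH : Differentiable ℝ H) {b c : V n → V n}
    (hb : Differentiable ℝ b) (hc : Differentiable ℝ c) (p w : V n) :
    fderiv ℝ (fun q => gg H q (b q) (c q)) p w
      = gg H p (fderiv ℝ b p w) (c p) + gg H p (b p) (fderiv ℝ c p w)
        + fderiv ℝ H p w * (b p 0 * c p 1 + b p 1 * c p 0 + H p * (b p 1 * c p 1)) := by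
  have hB := fun i => hasFDerivAt_pi'.1 (hb p).hasFDerivAt i
  have hC := fun i => hasFDerivAt_pi'.1 (hc p).hasFDerivAt i
  have hh := (hH p).hasFDerivAt
  have hS : HasFDerivAt (fun q => transDot (b q) (c q))
      (∑ i : Fin (n+3), if 2 ≤ (i : ℕ) then
        b p i • (ContinuousLinearMap.proj i).comp (fderiv ℝ c p)
          + c p i • (ContinuousLinearMap.proj i).comp (fderiv ℝ b p) else 0) p := by
    unfold transDot
    refine HasFDerivAt.fun_sum fun i _ => ?_
    split_ifs
    · exact (hB i).mul (hC i)
    · exact hasFDerivAt_const _ _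
  have hS' : (∑ i : Fin (n+3), if 2 ≤ (i : ℕ) then
        b p i • (ContinuousLinearMap.proj (R := ℝ) (φ := fun _ => ℝ) i).comp (fderiv ℝ c p)
          + c p i • (ContinuousLinearMap.proj i).comp (fderiv ℝ b p) else 0) w
      = transDot (fderiv ℝ b p w) (c p) + transDot (b p) (fderiv ℝ c p w) := by
    simp only [transDot, ← Finset.sum_add_distrib, sum_apply]
    refine Finset.sum_congr rfl fun i _ => ?_
    split_ifs
    · simp; ring
    · simp
  have hfull := ((((hB 0).const_mul 2).mul (hC 0)).add
    (hh.mul (((hB 0).mul (hC 1)).add ((hB 1).mul (hC 0))))).add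
    ((((hh.pow 2).const_add 1).mul_const (1/2)).mul ((hB 1).mul (hC 1))) |>.add hS
  have heq : (fun q => gg H q (b q) (c q)) = fun q =>
      2 * b q 0 * c q 0 + H q * (b q 0 * c q 1 + b q 1 * c q 0)
      + (1 + H q ^ 2) * (1/2) * (b q 1 * c q 1) + transDot (b q) (c q) := by
    funext q; rw [gg_eq]; ring
  rw [heq]
  erw [hfull.fderiv]
  rw [add_apply, hS', gg_eq, gg_eq]
  simp
  ring

/-- The connection `∇` is the Levi-Civita connection of the standard
Riemannian dual metric `g`: it is torsion-free and metric-compatible (so the listed `Γ`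
components are the Christoffel symbols of `g`). -/
theorem stmt_12 (n : ℕ) (H : V n → ℝ) (hH : ContDiff ℝ (⊤ : ℕ∞) H) (hHv : VIndep H) :
    ∀ a b c : V n → V n,
      ContDiff ℝ (⊤ : ℕ∞) a → ContDiff ℝ (⊤ : ℕ∞) b → ContDiff ℝ (⊤ : ℕ∞) c →
      ∀ p : V n,
        (cd H a b p - cd H b a p = br a b p) ∧
        fderiv ℝ (fun q => gg H q (b q) (c q)) p (a p)
          = gg H p (cd H a b p) (c p) + gg H p (b p) (cd H a c p) := by
  intro a b c _ hb hc p
  have hH' : Differentiable ℝ H := hH.differentiable (by simp)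
  have hb' : Differentiable ℝ b := hb.differentiable (by simp)
  have hc' : Differentiable ℝ c := hc.differentiable (by simp)
  constructor
  · simp only [cd, br, Ga_symm H p (b p) (a p)]
    abel
  · rw [fderiv_gg hH' hb' hc', fderiv_H hH' hHv]
    simp only [gg_eq, cd, Pi.add_apply, transDot_comm (b p), transDot_add_left, transDot_Ga,
      Ga_zero, Ga_one]
    ring
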